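/- Let N_v, r, d ≥ 1, let eₙ ∈ ℝ^{N_v} be a unit vector, and set C = eₙ eₙᵀ − I_{N_v}. Let A_σ ∈ ℝ^{r×r} be invertible, let A_1, …, A_d ∈ ℝ^{r×r}, and let Π_1, …, Π_d ∈ ℝ^{N_v×N_v} satisfy eₙᵀ Π_k eₙ = 0 and eₙᵀ Π_j Π_k eₙ = δ_{jk}/d for all 1 ≤ j, k ≤ d. Let Δt > 0, suppose L₀ⁿ = lⁿ eₙᵀ for some lⁿ ∈ ℝ^r (well-prepared data), and suppose L₀, L₁, L₁ⁿ, L₂, L₂ⁿ ∈ ℝ^{r×N_v} satisfy the Crank–Nicolson hierarchy: (i) A_σ (L₀ + L₀ⁿ) C = 0; (ii) Σ_{k=1}^d A_k (L₀ + L₀ⁿ) Π_k = A_σ (L₁ + L₁ⁿ) C; (iii) (L₀ − L₀ⁿ)/Δt + (1/2) Σ_{k=1}^d A_k (L₁ + L₁ⁿ) Π_k = (1/2) A_σ (L₂ + L₂ⁿ) C. Then L₀ = l₀ eₙᵀ with l₀ := L₀ eₙ, and (l₀ − lⁿ)/Δt − (1/(2d)) Σ_{k=1}^d A_k A_σ^{-1}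 A_k (l₀ + lⁿ) = 0. -/

import Mathlib

/-!
The matrix `C = e eᵀ - 1` is minus the projection off the unit vector `e`, so `X * C` recovers
`X` up to a rank-one term: `X = (X e) eᵀ - X C` (`eq_vecMulVec_sub_mul`), while `C e = 0`.

Write `S = L₀ + L₀ⁿ` and `M = L₁ + L₁ⁿ`. The first level gives `S C = 0`, hence `S = s eᵀ`
with `s = l₀ + lⁿ`, and well-preparedness makes `L₀` rank one. The second level determines `M C`,
so `M = (M e) eᵀ - Aσ⁻¹ ∑ A_k s eᵀ Π_k`; multiplying by `Π_j e`, the quadrature identities remove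
the undetermined part `M e` and leave `M Π_j e = -(1/d) Aσ⁻¹ A_j s`. Applying the third level
to `e` kills its right-hand side and closes the equation for `l₀`.
-/

open Matrix BigOperators

/-- For a unit vector `e`, the splitting of the rows of `X` into parts along and orthogonal to `e`;
the identity itself holds for every `e`. -/
theorem eq_vecMulVec_sub_mul {m n : ℕ} (e : Fin n → ℝ) (X : Matrix (Fin m) (Fin n) ℝ) :
    X = vecMulVec (X *ᵥ e) e - X * (vecMulVec e e - 1) := by
  rw [Matrix.mul_sub, mul_vecMulVec, Matrix.mul_one, sub_sub_cancel]

theorem vecMulVec_sub_one_mulVec {n : ℕ} (e : Fin n → ℝ) (he : e ⬝ᵥ e = 1) :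
    (vecMulVec e e - 1) *ᵥ e = 0 := by
  simp [sub_mulVec, vecMulVec_mulVec, he]

/-- Crank–Nicolson hierarchy of the CNIE L-step with well-prepared
data L₀ⁿ = lⁿ eₙᵀ. Under the quadrature identities eₙᵀΠ_keₙ = 0 and
eₙᵀΠ_jΠ_keₙ = δ_{jk}/d, the equations (i)–(iii) imply L₀ = l₀ eₙᵀ with
l₀ = L₀ eₙ, and (l₀ − lⁿ)/Δt − (1/(2d)) Σ_k A_k A_σ⁻¹ A_k (l₀ + lⁿ) = 0. -/
theorem stmt9 (Nv r d : ℕ) (hNv : 1 ≤ Nv) (hr : 1 ≤ r) (hd : 1 ≤ d)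
    (eN : Fin Nv → ℝ) (hunit : eN ⬝ᵥ eN = 1)
    (C : Matrix (Fin Nv) (Fin Nv) ℝ) (hC : C = vecMulVec eN eN - 1)
    (Aσ : Matrix (Fin r) (Fin r) ℝ) (hAσ : IsUnit Aσ.det)
    (A : Fin d → Matrix (Fin r) (Fin r) ℝ)
    (Pk : Fin d → Matrix (Fin Nv) (Fin Nv) ℝ)
    (hP1 : ∀ k, eN ⬝ᵥ (Pk k *ᵥ eN) = 0)
    (hP2 : ∀ j k, eN ⬝ᵥ ((Pk j * Pk k) *ᵥ eN) = if j = k then 1 / (d : ℝ) else 0)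
    (Δt : ℝ) (hΔt : 0 < Δt)
    (ln : Fin r → ℝ)
    (L₀n L₀ L₁ L₁n L₂ L₂n : Matrix (Fin r) (Fin Nv) ℝ)
    (hwp : L₀n = vecMulVec ln eN)
    (h1 : Aσ * (L₀ + L₀n) * C = 0)
    (h2 : ∑ k, A k * (L₀ + L₀n) * Pk k = Aσ * (L₁ + L₁n) * C)
    (h3 : Δt⁻¹ • (L₀ - L₀n) + (1 / 2 : ℝ) • ∑ k, A k * (L₁ + L₁n) * Pk k =
        (1 / 2 : ℝ) • (Aσ * (L₂ + L₂n) * C)) :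
    L₀ = vecMulVec (L₀ *ᵥ eN) eN ∧
      Δt⁻¹ • (L₀ *ᵥ eN - ln) -
        (1 / (2 * (d : ℝ))) • ∑ k, (A k * Aσ⁻¹ * A k) *ᵥ (L₀ *ᵥ eN + ln) = 0 := by
  subst hC
  have hinv : Aσ⁻¹ * Aσ = 1 := nonsing_inv_mul _ hAσ
  have hS0 : (L₀ + L₀n) * (vecMulVec eN eN - 1) = 0 := by
    have h := congrArg (Aσ⁻¹ * ·) h1
    simpa [← Matrix.mul_assoc, hinv] using h
  have hln : L₀n *ᵥ eN = ln := by
    rw [hwp, vecMulVec_mulVec, hunit]; simp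
  have hS : L₀ + L₀n = vecMulVec (L₀ *ᵥ eN + ln) eN := by
    have h := eq_vecMulVec_sub_mul eN (L₀ + L₀n)
    rwa [hS0, sub_zero, add_mulVec, hln] at h
  refine ⟨?_, ?_⟩
  · rw [add_vecMulVec, ← hwp] at hS
    exact add_right_cancel hS
  generalize hs : L₀ *ᵥ eN + ln = s at hS ⊢
  generalize hM : L₁ + L₁n = M at h2 h3
  have hMC : M * (vecMulVec eN eN - 1) = Aσ⁻¹ * ∑ k, A k * vecMulVec s eN * Pk k := by
    rw [← hS, h2, Matrix.mul_assoc Aσ, ← Matrix.mul_assoc, hinv, Matrix.one_mul]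
  have hflux : ∀ j, M *ᵥ (Pk j *ᵥ eN) = -((1 / (d : ℝ)) • (Aσ⁻¹ *ᵥ (A j *ᵥ s))) := by
    intro j
    have hterm : ∀ k, (A k * vecMulVec s eN * Pk k) *ᵥ (Pk j *ᵥ eN) =
        if k = j then (1 / (d : ℝ)) • (A j *ᵥ s) else 0 := by
      intro k
      rw [← mulVec_mulVec, mulVec_mulVec eN, mul_vecMulVec, vecMulVec_mulVec, hP2]
      split_ifs with hkj
      · subst hkj
        ext i
        simp [mul_comm]
      · simp
    conv_lhs => rw [eq_vecMulVec_sub_mul eN M, hMC]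
    rw [sub_mulVec, vecMulVec_mulVec, hP1, ← mulVec_mulVec, sum_mulVec]
    simp [hterm, mulVec_smul]
  have h := congrArg (· *ᵥ eN) h3
  simp only [add_mulVec, smul_mulVec, sub_mulVec, hln, sum_mulVec, ← mulVec_mulVec, hflux,
    vecMulVec_sub_one_mulVec eN hunit, mulVec_zero, smul_zero] at h
  simp only [← mulVec_mulVec]
  rw [← h, sub_eq_add_neg]
  congr 1
  simp only [mulVec_neg, mulVec_smul, Finset.sum_neg_distrib, smul_neg, ← Finset.smul_sum,
    smul_smul]
  congr 2
  field_simp
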